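/- Every mixed forest with at least one edge has either a path-ending or a star-ending. -/

import Mathlib

/-!
Root every component of the forest at a vertex of its first edge and let `d v` be the depth of a
vertex `v`: every edge has a unique top vertex, its other vertices lie exactly one level lower, and
a vertex lies below the top in at most one edge (`IsDepth`). Such a depth function is built along
the construction of a tree (`IsMixedTree.exists_isDepth`) and glued over disjoint components
(`IsMixedForest.exists_isDepth`).

Choose a vertex of maximal depth and an edge `h` containing it, with top vertex `v`. Any edge with
top `v` has all its other vertices at maximal depth, hence of degree one, so it is pendant. If some
edge other than `h` has top `v`, this is a star-ending. Otherwise at most one other edge `g`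
contains `v`, namely the one in which `v` lies below the top: if `g` exists, then `g, h` is a
path-ending with `v` of degree two, and if not, `h` is a one-edge component.
-/

open Finset

variable {V : Type*} [Fintype V] [DecidableEq V]

/-- The vertex set of a set of edges. -/
def verts (T : Finset (Finset V)) : Finset V := T.sup id

/-- A mixed tree: obtained from a single edge of size 2 or 3 by repeatedly adding edges
of size 2 or 3, each intersecting the set of vertices used so far in exactly one
vertex. -/
inductive IsMixedTree : Finset (Finset V) → Prop
  | single (e : Finset V) (he : e.card = 2 ∨ e.card = 3) : IsMixedTree {e}
  | extend (T : Finset (Finset V)) (e : Finset V) (hT : IsMixedTree T)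
      (he : e.card = 2 ∨ e.card = 3) (hcap : (e ∩ verts T).card = 1) :
      IsMixedTree (insert e T)

/-- A mixed forest: a vertex-disjoint union of mixed trees. -/
def IsMixedForest (F : Finset (Finset V)) : Prop :=
  ∃ C : Finset (Finset (Finset V)),
    (∀ T ∈ C, IsMixedTree T) ∧
    (∀ T₁ ∈ C, ∀ T₂ ∈ C, T₁ ≠ T₂ → Disjoint (verts T₁) (verts T₂)) ∧
    F = C.sup id

/-- The degree of a vertex in a set of edges. -/
def degree (F : Finset (Finset V)) (v : V) : ℕ := (F.filter fun e => v ∈ e).card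

/-- A pendant edge: an edge all of whose vertices, except one, have degree one. -/
def IsPendant (F : Finset (Finset V)) (h : Finset V) : Prop :=
  h ∈ F ∧ ∃ v ∈ h, ∀ w ∈ h, w ≠ v → degree F w = 1

/-- A path-ending: a pendant edge `h` together with an edge `g` meeting it in a single
vertex of degree 2; or (degenerate case) the unique edge of a one-edge component. -/
def HasPathEnding (F : Finset (Finset V)) : Prop :=
  (∃ g ∈ F, ∃ h ∈ F, g ≠ h ∧ IsPendant F h ∧ (g ∩ h).card = 1 ∧
      ∀ v ∈ g ∩ h, degree F v = 2) ∨
  (∃ h ∈ F, ∀ e ∈ F, e ≠ h → Disjoint e h)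

/-- A star-ending: a set of at least two pendant edges with a common vertex. -/
def HasStarEnding (F : Finset (Finset V)) : Prop :=
  ∃ S : Finset (Finset V), S ⊆ F ∧ 2 ≤ S.card ∧ (∀ h ∈ S, IsPendant F h) ∧
    ∃ v : V, ∀ h ∈ S, v ∈ h

/-- `d` behaves like the depth function of a rooted hypergraph forest with edge set `F`: every edge
has at least two vertices and a top vertex, the other vertices of the edge being one level deeper,
and each vertex lies below the top in at most one edge. -/
def IsDepth (F : Finset (Finset V)) (d : V → ℕ) : Prop :=
  (∀ e ∈ F, 2 ≤ e.card ∧ ∃ v ∈ e, ∀ w ∈ e, w ≠ v → d w = d v + 1) ∧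
  (∀ e ∈ F, ∀ f ∈ F, ∀ w, w ∈ e → w ∈ f → (∃ u ∈ e, d u < d w) → (∃ u ∈ f, d u < d w) → e = f)

theorem mem_verts {T : Finset (Finset V)} {e : Finset V} (he : e ∈ T) {x : V} (hx : x ∈ e) :
    x ∈ verts T := by
  unfold verts
  exact Finset.mem_sup.mpr ⟨e, he, hx⟩

theorem IsMixedTree.exists_isDepth {T : Finset (Finset V)} (hT : IsMixedTree T) :
    ∃ d, IsDepth T d := by
  induction hT with
  | single e he =>
    obtain ⟨r, hr⟩ : e.Nonempty := Finset.card_pos.mp (by omega)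
    refine ⟨fun x => if x = r then 0 else 1, ?_, ?_⟩
    · simp only [Finset.mem_singleton, forall_eq]
      exact ⟨by omega, r, hr, by simp +contextual⟩
    · simp only [Finset.mem_singleton]
      rintro e rfl f rfl
      simp
  | extend T e hT he hcap ih =>
    obtain ⟨d, hA, hB⟩ := ih
    obtain ⟨v, hv⟩ := Finset.card_eq_one.mp hcap
    have hmem : ∀ x, x ∈ e → x ∈ verts T → x = v := fun x h1 h2 => by
      simpa [hv] using Finset.mem_inter.mpr ⟨h1, h2⟩
    have hve : v ∈ e ∧ v ∈ verts T := Finset.mem_inter.mp (by simp [hv])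
    -- the new vertices are placed one level below the attaching vertex `v`
    set d' : V → ℕ := fun x => if x ∈ verts T then d x else d v + 1 with hd'
    have hold : ∀ f ∈ T, ∀ x ∈ f, d' x = d x := fun f hf x hx => by
      simp [hd', mem_verts hf hx]
    have hdv : d' v = d v := by simp [hd', hve.2]
    have hnew : ∀ x ∈ e, x ≠ v → d' x = d v + 1 := fun x hx hxv => by
      have : x ∉ verts T := fun h => hxv (hmem x hx h)
      simp [hd', this]
    have hmin : ∀ u ∈ e, ¬ d' u < d' v := fun u hu hlt => by
      by_cases h : u = v
      · subst h; omega
      · have := hnew u hu h; omega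
    refine ⟨d', ?_, ?_⟩
    · intro f hf
      rcases Finset.mem_insert.mp hf with rfl | hf
      · exact ⟨by omega, v, hve.1, fun w hw hwv => by rw [hdv]; exact hnew w hw hwv⟩
      · obtain ⟨hc, x, hx, h⟩ := hA f hf
        refine ⟨hc, x, hx, fun w hw hwx => ?_⟩
        rw [hold f hf w hw, hold f hf x hx]
        exact h w hw hwx
    · rintro f hf g hg w hwf hwg ⟨u, hu, hlt⟩ ⟨u', hu', hlt'⟩
      rw [Finset.mem_insert] at hf hg
      rcases hf with rfl | hf <;> rcases hg with rfl | hg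
      · rfl
      · obtain rfl := hmem w hwf (mem_verts hg hwg)
        exact absurd hlt (hmin u hu)
      · obtain rfl := hmem w hwg (mem_verts hf hwf)
        exact absurd hlt' (hmin u' hu')
      · rw [hold f hf u hu, hold f hf w hwf] at hlt
        rw [hold g hg u' hu', hold f hf w hwf] at hlt'
        exact hB f hf g hg w hwf hwg ⟨u, hu, hlt⟩ ⟨u', hu', hlt'⟩

theorem IsDepth.union {F G : Finset (Finset V)} {d₁ d₂ : V → ℕ} (h₁ : IsDepth F d₁)
    (h₂ : IsDepth G d₂) (hdisj : Disjoint (verts F) (verts G)) :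
    IsDepth (F ∪ G) fun x => if x ∈ verts F then d₁ x else d₂ x := by
  set d : V → ℕ := fun x => if x ∈ verts F then d₁ x else d₂ x with hd
  have hF : ∀ f ∈ F, ∀ x ∈ f, d x = d₁ x := fun f hf x hx => by
    simp [hd, mem_verts hf hx]
  have hG : ∀ f ∈ G, ∀ x ∈ f, d x = d₂ x := fun f hf x hx => by
    simp [hd, Finset.disjoint_right.mp hdisj (mem_verts hf hx)]
  refine ⟨fun e he => ?_, ?_⟩
  · rcases Finset.mem_union.mp he with he | he
    · obtain ⟨hc, x, hx, h⟩ := h₁.1 e he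
      refine ⟨hc, x, hx, fun w hw hwx => ?_⟩
      rw [hF e he w hw, hF e he x hx, h w hw hwx]
    · obtain ⟨hc, x, hx, h⟩ := h₂.1 e he
      refine ⟨hc, x, hx, fun w hw hwx => ?_⟩
      rw [hG e he w hw, hG e he x hx, h w hw hwx]
  · rintro f hf g hg w hwf hwg ⟨u, hu, hlt⟩ ⟨u', hu', hlt'⟩
    rcases Finset.mem_union.mp hf with hf | hf <;> rcases Finset.mem_union.mp hg with hg | hg
    · rw [hF f hf u hu, hF f hf w hwf] at hlt
      rw [hF g hg u' hu', hF f hf w hwf] at hlt'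
      exact h₁.2 f hf g hg w hwf hwg ⟨u, hu, hlt⟩ ⟨u', hu', hlt'⟩
    · exact absurd (mem_verts hg hwg) (Finset.disjoint_left.mp hdisj (mem_verts hf hwf))
    · exact absurd (mem_verts hf hwf) (Finset.disjoint_left.mp hdisj (mem_verts hg hwg))
    · rw [hG f hf u hu, hG f hf w hwf] at hlt
      rw [hG g hg u' hu', hG f hf w hwf] at hlt'
      exact h₂.2 f hf g hg w hwf hwg ⟨u, hu, hlt⟩ ⟨u', hu', hlt'⟩

theorem IsMixedForest.exists_isDepth {F : Finset (Finset V)} (hF : IsMixedForest F) :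
    ∃ d, IsDepth F d := by
  obtain ⟨C, hC, hdisj, rfl⟩ := hF
  induction C using Finset.induction_on with
  | empty => exact ⟨fun _ => 0, by simp [IsDepth]⟩
  | insert T C hTC ih =>
    obtain ⟨d₁, h₁⟩ := (hC T (Finset.mem_insert_self _ _)).exists_isDepth
    obtain ⟨d₂, h₂⟩ := ih (fun S hS => hC S (Finset.mem_insert_of_mem hS))
      (fun S hS S' hS' => hdisj S (Finset.mem_insert_of_mem hS) S' (Finset.mem_insert_of_mem hS'))
    rw [Finset.sup_insert]
    refine ⟨_, h₁.union h₂ ?_⟩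
    rw [Finset.disjoint_left]
    intro x hx hx'
    obtain ⟨e, he, hxe⟩ := Finset.mem_sup.mp hx'
    obtain ⟨S, hS, heS⟩ := Finset.mem_sup.mp he
    have hne : T ≠ S := fun h => hTC (h ▸ hS)
    exact Finset.disjoint_left.mp (hdisj T (Finset.mem_insert_self _ _) S
      (Finset.mem_insert_of_mem hS) hne) hx (mem_verts heS hxe)

theorem IsDepth.pathEnding_or_starEnding {F : Finset (Finset V)} {d : V → ℕ} (hd : IsDepth F d)
    (hne : F.Nonempty) : HasPathEnding F ∨ HasStarEnding F := by
  obtain ⟨hA, hB⟩ := hd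
  have hvne : (verts F).Nonempty := by
    obtain ⟨e, he⟩ := hne
    obtain ⟨-, v, hv, -⟩ := hA e he
    exact ⟨v, mem_verts he hv⟩
  obtain ⟨m, hm, hmax⟩ := Finset.exists_max_image (verts F) d hvne
  have hmax' : ∀ e ∈ F, ∀ x ∈ e, d x ≤ d m := fun e he x hx => hmax x (mem_verts he hx)
  obtain ⟨h, hh, hmh⟩ := Finset.mem_sup.mp hm
  change m ∈ h at hmh
  obtain ⟨hcard, v, hv, hvh⟩ := hA h hh
  -- `m` is not the top of `h`, since `h` has a second vertex
  have hdm : d m = d v + 1 := by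
    by_cases hmv : m = v
    · obtain ⟨x, hx, hxm⟩ := Finset.exists_mem_ne (by omega : 1 < h.card) m
      have h1 := hvh x hx (hmv ▸ hxm)
      have h2 := hmax' h hh x hx
      subst hmv; omega
    · exact hvh m hmh hmv
  -- a vertex of maximal depth lying in an edge with top `v` lies in no other edge
  have huniq : ∀ e ∈ F, v ∈ e → ∀ w ∈ e, d w = d v + 1 → ∀ f ∈ F, w ∈ f → f = e := by
    intro e he hve w hw hdw f hf hwf
    refine hB f hf e he w hwf hw ?_ ⟨v, hve, by omega⟩
    obtain ⟨hcf, t, ht, htf⟩ := hA f hf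
    by_cases hwt : w = t
    · obtain ⟨x, hx, hxm⟩ := Finset.exists_mem_ne (by omega : 1 < f.card) w
      have h1 := htf x hx (hwt ▸ hxm)
      have h2 := hmax' f hf x hx
      subst hwt; omega
    · exact ⟨t, ht, by have := htf w hwf hwt; omega⟩
  have hpend : ∀ e ∈ F, v ∈ e → (∀ w ∈ e, w ≠ v → d w = d v + 1) → IsPendant F e := by
    intro e he hve htop
    refine ⟨he, v, hve, fun w hw hwv => ?_⟩
    unfold degree
    rw [Finset.card_eq_one]
    refine ⟨e, ?_⟩
    ext f
    simp only [Finset.mem_filter, Finset.mem_singleton]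
    constructor
    · rintro ⟨hf, hwf⟩
      exact huniq e he hve w hw (htop w hw hwv) f hf hwf
    · rintro rfl
      exact ⟨he, hw⟩
  by_cases hstar : ∃ e ∈ F, e ≠ h ∧ v ∈ e ∧ ∀ w ∈ e, w ≠ v → d w = d v + 1
  · obtain ⟨e, he, heh, hve, htop⟩ := hstar
    right
    refine ⟨{e, h}, ?_, (Finset.card_pair heh).ge, ?_, v, ?_⟩
    · simp [Finset.insert_subset_iff, he, hh]
    · simp only [Finset.mem_insert, Finset.mem_singleton]
      rintro x (rfl | rfl)
      exacts [hpend _ he hve htop, hpend _ hh hv hvh]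
    · simp [hve, hv]
  left
  have hbelow : ∀ e ∈ F, e ≠ h → v ∈ e → ∃ u ∈ e, d u < d v := by
    intro e he heh hve
    obtain ⟨-, t, ht, hte⟩ := hA e he
    by_cases hvt : v = t
    · subst hvt
      exact absurd ⟨e, he, heh, hve, hte⟩ hstar
    · exact ⟨t, ht, by have := hte v hve hvt; omega⟩
  have hmeet : ∀ e ∈ F, e ≠ h → ∀ x ∈ e, x ∈ h → x = v := by
    intro e he heh x hxe hxh
    by_contra hxv
    exact heh (huniq h hh hv x hxh (hvh x hxh hxv) e he hxe)
  by_cases hg : ∃ g ∈ F, g ≠ h ∧ v ∈ g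
  · obtain ⟨g, hg, hgh, hvg⟩ := hg
    have hinter : g ∩ h = {v} := by
      ext x
      simp only [Finset.mem_inter, Finset.mem_singleton]
      exact ⟨fun hx => hmeet g hg hgh x hx.1 hx.2, by rintro rfl; exact ⟨hvg, hv⟩⟩
    refine Or.inl ⟨g, hg, h, hh, hgh, hpend h hh hv hvh, by simp [hinter], ?_⟩
    rw [hinter]
    simp only [Finset.mem_singleton, forall_eq]
    unfold degree
    rw [Finset.card_eq_two]
    refine ⟨g, h, hgh, ?_⟩
    ext f
    simp only [Finset.mem_filter, Finset.mem_insert, Finset.mem_singleton]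
    constructor
    · rintro ⟨hf, hvf⟩
      by_cases hfh : f = h
      · exact Or.inr hfh
      · exact Or.inl (hB f hf g hg v hvf hvg (hbelow f hf hfh hvf) (hbelow g hg hgh hvg))
    · rintro (rfl | rfl)
      exacts [⟨hg, hvg⟩, ⟨hh, hv⟩]
  · refine Or.inr ⟨h, hh, fun e he heh => Finset.disjoint_left.mpr fun x hxe hxh => ?_⟩
    exact hg ⟨e, he, heh, hmeet e he heh x hxe hxh ▸ hxe⟩

/-- Every mixed forest with at least one edge has either a path-ending or a
star-ending. -/
theorem mixedForest_pathEnding_or_starEnding (F : Finset (Finset V))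
    (hF : IsMixedForest F) (hne : F.Nonempty) :
    HasPathEnding F ∨ HasStarEnding F := by
  obtain ⟨d, hd⟩ := hF.exists_isDepth
  exact hd.pathEnding_or_starEnding hne
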